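/- Let D ⊂ ℝ^d be a nonempty bounded convex open set with closure K, let 0 < γ ≤ 1, let p > 2d/γ be real, and let C be the diagonal trace constant of the base case (depending only on d, p, γ, D). Let k ≥ 1 and let f : K × K^k → ℝ be continuous, written f(x, y_1, …, y_k), with finite mixed norm N := max{ sup_{y ∈ K^k} (∫_D |f(x,y)|^p dx)^{1/p} , sup over nonempty T ⊆ {1,…,k}, y ∈ K^k, and increments h with h_i ≠ 0 for i ∈ T, y + h ∈ K^k, of (∫_D |Δ_T^h f(x, ·)(y)|^p dx)^{1/p} / ∏_{i∈T} ‖h_i‖^γ }. Then the full diagonal trace x ↦ f(x, x, …, x) satisfies (∫_D |f(x,x,…,x)|^p dx)^{1/p} ≤ C^k · N. -/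

import Mathlib

open MeasureTheory Finset

/-!
The coordinates `y_i` are replaced by `x` one at a time. If `f` has mixed bound `N` and the
coordinate `a` is not in `T`, put `ξ(x, z) = Δ_T f(x, ·)(y)` with `y_a = z`. The bound on
differences over `T` controls `ξ(·, z)`, and since `ξ(x, z) - ξ(x, z')` is a difference over
`T ∪ {a}`, the bound on differences over `T ∪ {a}` controls the Hölder seminorm of `ξ`. The base
case then bounds `ξ(x, x)`, which is the difference over `T` of the function with `y_a` set to `x`:
that function has mixed bound `C N` in the remaining coordinates.

Nothing about `L^p` norms enters this argument, so they are replaced by an arbitrary functional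
`Φ`, and `‖z - z'‖ ^ γ` by an arbitrary function `ω` of two points.
-/

section CoordinateTrace

open Function

variable {ι E F : Type*} [DecidableEq ι] {K : Set E}

lemma forall_update_mem {y : ι → E} (hy : ∀ i, y i ∈ K) (a : ι) {z : E} (hz : z ∈ K) (i : ι) :
    update y a z i ∈ K :=
  (forall_update_iff y fun _ v ↦ v ∈ K).2 ⟨hz, fun j _ ↦ hy j⟩ i

lemma continuousOn_trace_coord [TopologicalSpace E] [TopologicalSpace F]
    {f : E → (ι → E) → F} (hf : ContinuousOn (uncurry f) (K ×ˢ {y | ∀ i, y i ∈ K})) (a : ι) :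
    ContinuousOn (uncurry fun x y ↦ f x (update y a x)) (K ×ˢ {y | ∀ i, y i ∈ K}) :=
  hf.comp (f := fun z : E × (ι → E) ↦ (z.1, update z.2 a z.1)) (by fun_prop)
    fun _ hz ↦ ⟨hz.1, forall_update_mem hz.2 a hz.1⟩

end CoordinateTrace

section MixedDifference

open Function

variable {ι E F : Type*} [DecidableEq ι] [AddCommGroup F] {T : Finset ι} {a : ι}

/-- The mixed difference `∑_{S ⊆ T} (-1)^{|T \ S|} g(y_S)`, where `y_S` agrees with `y'` on `S` and
with `y` elsewhere. It is `Δ_T^h g(y)` for `h = y' - y`; giving the two corners of the box rather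
than a corner and an increment avoids any algebraic structure on `E`. -/
def mixedDiff (T : Finset ι) (y y' : ι → E) (g : (ι → E) → F) : F :=
  ∑ S ∈ T.powerset, (-1 : ℤ) ^ (#T - #S) • g (S.piecewise y' y)

@[simp]
lemma mixedDiff_empty (y y' : ι → E) (g : (ι → E) → F) : mixedDiff ∅ y y' g = g y := by
  simp [mixedDiff]

lemma mixedDiff_comp_update (ha : a ∉ T) (y y' : ι → E) (z : E) (g : (ι → E) → F) :
    mixedDiff T y y' (fun v ↦ g (update v a z)) = mixedDiff T (update y a z) y' g := by
  refine sum_congr rfl fun S hS ↦ ?_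
  beta_reduce
  rw [update_piecewise_of_notMem _ _ _ (notMem_mono (mem_powerset.1 hS) ha)]

lemma mixedDiff_update_right (ha : a ∉ T) (y y' : ι → E) (z : E) (g : (ι → E) → F) :
    mixedDiff T y (update y' a z) g = mixedDiff T y y' g := by
  refine sum_congr rfl fun S hS ↦ ?_
  have haS : a ∉ S := notMem_mono (mem_powerset.1 hS) ha
  rw [S.piecewise_congr (fun i hi ↦ update_of_ne (ne_of_mem_of_not_mem hi haS) z y')
    fun _ _ ↦ rfl]

lemma mixedDiff_insert (ha : a ∉ T) (y y' : ι → E) (g : (ι → E) → F) :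
    mixedDiff (insert a T) y y' g
      = mixedDiff T (update y a (y' a)) y' g - mixedDiff T y y' g := by
  rw [← mixedDiff_comp_update ha, mixedDiff, sum_powerset_insert ha, add_comm, sub_eq_add_neg]
  simp only [mixedDiff, ← sum_neg_distrib]
  congr 1 <;> refine sum_congr rfl fun S hS ↦ ?_
  · rw [piecewise_insert, card_insert_of_notMem ha,
      card_insert_of_notMem (notMem_mono (mem_powerset.1 hS) ha), Nat.add_sub_add_right]
  · rw [card_insert_of_notMem ha, Nat.sub_add_comm (card_le_card (mem_powerset.1 hS)), pow_succ,
      mul_neg_one, neg_smul]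

lemma mixedDiff_update_sub_mixedDiff_update (ha : a ∉ T) (y y' : ι → E) (z z' : E)
    (g : (ι → E) → F) :
    mixedDiff T (update y a z) y' g - mixedDiff T (update y a z') y' g
      = mixedDiff (insert a T) (update y a z') (update y' a z) g := by
  simp only [mixedDiff_insert ha, mixedDiff_update_right ha, update_self, update_idem]

lemma mixedDiff_eq_zero (ha : a ∈ T) {y y' : ι → E} (h : y' a = y a) (g : (ι → E) → F) :
    mixedDiff T y y' g = 0 := by
  rw [← insert_erase ha, mixedDiff_insert (notMem_erase a T), h, update_eq_self, sub_self]

lemma mixedDiff_eq_sum_increment {G R : Type*} [AddCommGroup G] [Ring R] {y y' h : ι → G}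
    (hh : ∀ i ∈ T, y i + h i = y' i) (g : (ι → G) → R) :
    mixedDiff T y y' g
      = ∑ S ∈ T.powerset, (-1 : R) ^ (#T - #S) * g (fun i ↦ y i + if i ∈ S then h i else 0) := by
  refine sum_congr rfl fun S hS ↦ ?_
  have corner_eq : S.piecewise y' y = fun i ↦ y i + if i ∈ S then h i else 0 := by
    funext i
    by_cases hi : i ∈ S
    · simp [hi, hh i (mem_powerset.1 hS hi)]
    · simp [hi]
  rw [corner_eq, zsmul_eq_mul]
  push_cast
  rfl

end MixedDifference

section DiagonalTrace

open Function

variable {ι E F : Type*} [DecidableEq ι] [AddCommGroup F]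
  {Φ : (E → F) → ℝ} {ω : E → E → ℝ} {K : Set E} {s : Finset ι} {a : ι}
  {f : E → (ι → E) → F} {C N : ℝ}

/-- `f : K × K^ι → F` has mixed norm at most `N` in the coordinates of `s`, where `Φ` measures the
size of functions of `x` and `ω` the length of an edge of the box with corners `y` and `y'`. The
case `T = ∅` is the bound on `f(·, y)` itself, and degenerate boxes are allowed. -/
def HasMixedBound (Φ : (E → F) → ℝ) (ω : E → E → ℝ) (K : Set E) (s : Finset ι)
    (f : E → (ι → E) → F) (N : ℝ) : Prop :=
  ∀ T ⊆ s, ∀ y y' : ι → E, (∀ i, y i ∈ K) → (∀ i, y' i ∈ K) →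
    Φ (fun x ↦ mixedDiff T y y' (f x)) ≤ N * ∏ i ∈ T, ω (y' i) (y i)

/-- `C` is a constant for the diagonal trace inequality in one parameter: continuous `ξ` on `K × K`
with sup norm at most `M₁` and `ω`-Hölder seminorm at most `M₂` in the second variable, both
measured by `Φ` in the first, have diagonal of size at most `C max{M₁, M₂}`. -/
def IsDiagonalTraceConst [TopologicalSpace E] [TopologicalSpace F] (Φ : (E → F) → ℝ)
    (ω : E → E → ℝ) (K : Set E) (C : ℝ) : Prop :=
  ∀ (ξ : E → E → F) (M₁ M₂ : ℝ), ContinuousOn (uncurry ξ) (K ×ˢ K) →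
    (∀ y ∈ K, Φ (fun x ↦ ξ x y) ≤ M₁) →
    (∀ y ∈ K, ∀ y' ∈ K, Φ (fun x ↦ ξ x y - ξ x y') ≤ M₂ * ω y y') →
    Φ (fun x ↦ ξ x x) ≤ C * max M₁ M₂

lemma HasMixedBound.of_increments {G R : Type*} [AddCommGroup G] [Ring R] {Φ : (G → R) → ℝ}
    {w : G → ℝ} {K : Set G} {f : G → (ι → G) → R} (hΦ : Φ 0 = 0) (hw : w 0 = 0)
    (hsup : ∀ y : ι → G, (∀ i, y i ∈ K) → Φ (fun x ↦ f x y) ≤ N)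
    (hmix : ∀ T : Finset ι, T.Nonempty → ∀ y h : ι → G, (∀ i, y i ∈ K) →
      (∀ i ∈ T, h i ≠ 0) → (∀ i ∉ T, h i = 0) → (∀ i, y i + h i ∈ K) →
      Φ (fun x ↦ ∑ S ∈ T.powerset, (-1 : R) ^ (#T - #S) *
        f x (fun i ↦ y i + if i ∈ S then h i else 0)) ≤ N * ∏ i ∈ T, w (h i)) :
    HasMixedBound Φ (fun z z' ↦ w (z - z')) K s f N := by
  intro T _ y y' hy hy'
  obtain rfl | hT := T.eq_empty_or_nonempty
  · simpa using hsup y hy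
  by_cases hdeg : ∃ i ∈ T, y' i = y i
  · obtain ⟨i, hi, hyi⟩ := hdeg
    have hprod : ∏ i ∈ T, w (y' i - y i) = 0 := prod_eq_zero hi (by rw [hyi, sub_self, hw])
    simp only [mixedDiff_eq_zero hi hyi, hprod, mul_zero]
    exact hΦ.le
  · push Not at hdeg
    set h := T.piecewise (y' - y) 0
    have hh : ∀ i ∈ T, h i = y' i - y i := fun i hi ↦ T.piecewise_eq_of_mem _ _ hi
    have hh' : ∀ i ∉ T, h i = 0 := fun i hi ↦ T.piecewise_eq_of_notMem _ _ hi
    have hyh : ∀ i ∈ T, y i + h i = y' i := fun i hi ↦ by rw [hh i hi, add_sub_cancel]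
    simp only [mixedDiff_eq_sum_increment hyh]
    rw [← prod_congr rfl fun i hi ↦ congrArg w (hh i hi)]
    refine hmix T hT y h hy (fun i hi ↦ ?_) hh' fun i ↦ ?_
    · rw [hh i hi]
      exact sub_ne_zero.2 (hdeg i hi)
    · by_cases hi : i ∈ T
      · exact hyh i hi ▸ hy' i
      · rw [hh' i hi, add_zero]
        exact hy i

variable [TopologicalSpace E] [TopologicalSpace F]

lemma continuousOn_mixedDiff_update [IsTopologicalAddGroup F]
    (hf : ContinuousOn (uncurry f) (K ×ˢ {y | ∀ i, y i ∈ K})) {T : Finset ι} (ha : a ∉ T)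
    {y y' : ι → E} (hy : ∀ i, y i ∈ K) (hy' : ∀ i, y' i ∈ K) :
    ContinuousOn (uncurry fun x z ↦ mixedDiff T (update y a z) y' (f x)) (K ×ˢ K) := by
  have hsum : (uncurry fun x z ↦ mixedDiff T (update y a z) y' (f x)) = fun z : E × E ↦
      ∑ S ∈ T.powerset, (-1 : ℤ) ^ (#T - #S) • f z.1 (update (S.piecewise y' y) a z.2) := by
    funext z
    exact (mixedDiff_comp_update ha y y' z.2 (f z.1)).symm
  rw [hsum]
  refine continuousOn_finsetSum _ fun S _ ↦ .zsmul ?_ _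
  have corner_mem : ∀ i, S.piecewise y' y i ∈ K := fun i ↦
    S.piecewise_cases y' y (· ∈ K) (hy' i) (hy i)
  exact hf.comp (f := fun z : E × E ↦ (z.1, update (S.piecewise y' y) a z.2)) (by fun_prop)
    fun _ hz ↦ ⟨hz.1, forall_update_mem corner_mem a hz.2⟩

lemma HasMixedBound.trace_coord [IsTopologicalAddGroup F] (hC : IsDiagonalTraceConst Φ ω K C)
    (hf : ContinuousOn (uncurry f) (K ×ˢ {y | ∀ i, y i ∈ K})) (ha : a ∉ s)
    (hN : HasMixedBound Φ ω K (insert a s) f N) :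
    HasMixedBound Φ ω K s (fun x y ↦ f x (update y a x)) (C * N) := by
  intro T hT y y' hy hy'
  have haT : a ∉ T := notMem_mono hT ha
  set P := ∏ i ∈ T, ω (y' i) (y i)
  have prod_update (z z' : E) : ∏ i ∈ T, ω (update y' a z i) (update y a z' i) = P :=
    prod_congr rfl fun i hi ↦ by
      have hia : i ≠ a := ne_of_mem_of_not_mem hi haT
      rw [update_of_ne hia, update_of_ne hia]
  have sup_bound : ∀ z ∈ K, Φ (fun x ↦ mixedDiff T (update y a z) y' (f x)) ≤ N * P := by
    intro z hz
    rw [← prod_update (y' a) z, update_eq_self]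
    exact hN T (hT.trans (subset_insert a s)) _ _ (forall_update_mem hy a hz) hy'
  have holder_bound : ∀ z ∈ K, ∀ z' ∈ K,
      Φ (fun x ↦ mixedDiff T (update y a z) y' (f x) - mixedDiff T (update y a z') y' (f x))
        ≤ N * P * ω z z' := by
    intro z hz z' hz'
    have h := hN (insert a T) (insert_subset_insert a hT) _ _
      (forall_update_mem hy a hz') (forall_update_mem hy' a hz)
    rw [prod_insert haT, prod_update, update_self, update_self, mul_left_comm, mul_comm] at h
    simpa only [mixedDiff_update_sub_mixedDiff_update haT] using h
  have h := hC _ _ _ (continuousOn_mixedDiff_update hf haT hy hy') sup_bound holder_bound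
  simpa only [mixedDiff_comp_update haT, max_self, mul_assoc] using h

theorem stmt_6_general [IsTopologicalAddGroup F] (hC : IsDiagonalTraceConst Φ ω K C)
    (hf : ContinuousOn (uncurry f) (K ×ˢ {y | ∀ i, y i ∈ K})) (hN : HasMixedBound Φ ω K s f N)
    {y : ι → E} (hy : ∀ i, y i ∈ K) :
    Φ (fun x ↦ f x (s.piecewise (fun _ ↦ x) y)) ≤ C ^ #s * N := by
  induction s using Finset.induction_on generalizing f N with
  | empty => simpa using hN ∅ subset_rfl y y hy hy
  | insert a s ha ih =>
    simp only [piecewise_insert, card_insert_of_notMem ha, pow_succ, mul_assoc]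
    exact ih (continuousOn_trace_coord hf a) (hN.trace_coord hC hf ha)

end DiagonalTrace

/-- iterated diagonal trace bound. Let `D ⊂ ℝ^d` be nonempty bounded
convex open with closure `K`, `0 < γ ≤ 1`, `p > 2d/γ`, and let `C > 0` be a base-case
diagonal trace constant, i.e. every continuous `ξ : K × K → ℝ` satisfies
`‖ξ(x,x)‖_{L^p(D)} ≤ C max{sup_y ‖ξ(·,y)‖_{L^p}, [ξ]}`. Then for `k ≥ 1` and every
continuous `f : K × K^k → ℝ` whose mixed norm is bounded by `N`, the full diagonal
trace satisfies `‖f(x,x,…,x)‖_{L^p(D)} ≤ C^k · N`. -/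
theorem stmt_6 {d k : ℕ} (hk : 1 ≤ k) (D : Set (EuclideanSpace ℝ (Fin d)))
    (hne : D.Nonempty) (hD : Bornology.IsBounded D) (hconv : Convex ℝ D)
    (hopen : IsOpen D)
    (γ p C : ℝ) (hγ0 : 0 < γ) (hγ1 : γ ≤ 1) (hp : 2 * d / γ < p) (hC : 0 < C)
    (hbase : ∀ (ξ : EuclideanSpace ℝ (Fin d) → EuclideanSpace ℝ (Fin d) → ℝ)
      (M1 M2 : ℝ),
      ContinuousOn (fun z : EuclideanSpace ℝ (Fin d) × EuclideanSpace ℝ (Fin d) =>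
        ξ z.1 z.2) (closure D ×ˢ closure D) →
      (∀ y ∈ closure D, (∫ x in D, |ξ x y| ^ p) ^ (1 / p) ≤ M1) →
      (∀ y ∈ closure D, ∀ y' ∈ closure D,
        (∫ x in D, |ξ x y - ξ x y'| ^ p) ^ (1 / p) ≤ M2 * ‖y - y'‖ ^ γ) →
      (∫ x in D, |ξ x x| ^ p) ^ (1 / p) ≤ C * max M1 M2) :
    ∀ (f : EuclideanSpace ℝ (Fin d) → (Fin k → EuclideanSpace ℝ (Fin d)) → ℝ)
      (N : ℝ),
      ContinuousOn
        (fun z : EuclideanSpace ℝ (Fin d) × (Fin k → EuclideanSpace ℝ (Fin d)) =>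
          f z.1 z.2)
        (closure D ×ˢ {y | ∀ i, y i ∈ closure D}) →
      (∀ y : Fin k → EuclideanSpace ℝ (Fin d), (∀ i, y i ∈ closure D) →
        (∫ x in D, |f x y| ^ p) ^ (1 / p) ≤ N) →
      (∀ T : Finset (Fin k), T.Nonempty →
        ∀ y h : Fin k → EuclideanSpace ℝ (Fin d),
        (∀ i, y i ∈ closure D) → (∀ i ∈ T, h i ≠ 0) → (∀ i ∉ T, h i = 0) →
        (∀ i, y i + h i ∈ closure D) →
        (∫ x in D, |∑ S ∈ T.powerset, (-1 : ℝ) ^ (T.card - S.card) *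
            f x (fun i => y i + if i ∈ S then h i else 0)| ^ p) ^ (1 / p)
          ≤ N * ∏ i ∈ T, ‖h i‖ ^ γ) →
      (∫ x in D, |f x (fun _ => x)| ^ p) ^ (1 / p) ≤ C ^ k * N := by
  intro f N hf hsup hmix
  have hp0 : 0 < p := lt_of_le_of_lt (by positivity) hp
  obtain ⟨x₀, hx₀⟩ := hne
  let Φ (g : EuclideanSpace ℝ (Fin d) → ℝ) : ℝ := (∫ x in D, |g x| ^ p) ^ (1 / p)
  have hN : HasMixedBound Φ (fun y y' ↦ ‖y - y'‖ ^ γ) (closure D) univ f N :=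
    .of_increments (w := (‖·‖ ^ γ)) (by simp [Φ, hp0.ne']) (by simp [hγ0.ne']) hsup hmix
  have htrace : IsDiagonalTraceConst Φ (fun y y' ↦ ‖y - y'‖ ^ γ) (closure D) C := hbase
  simpa only [piecewise_univ, card_fin] using
    stmt_6_general htrace hf hN (y := fun _ ↦ x₀) fun _ ↦ subset_closure hx₀
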